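/- Let ε ∼ 𝒩(0, I_q), Δ > 0, and let g : ℝ^d → ℝ be L-Lipschitz. Define ℰ(x,u) = x + Δ b(x) + √Δ σ(x)u with b, σ Lipschitz, and Qg(x) = E[g(ℰ(x,ε)) ε] ∈ ℝ^q. Then Qg is Lipschitz with [Qg]_Lip ≤ √q · e^{ΔC} · L, where C = [b]_Lip + (1/2)([σ]²_Lip + Δ[b]²_Lip). -/

import Mathlib

open MeasureTheory ProbabilityTheory

/-- The one-step Euler map `ℰ(x,u) = x + Δ b(x) + √Δ σ(x) u`. -/
noncomputable def eulerMap {d q : ℕ} (Δ : ℝ)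
    (b : EuclideanSpace ℝ (Fin d) → EuclideanSpace ℝ (Fin d))
    (σ : EuclideanSpace ℝ (Fin d) → Matrix (Fin d) (Fin q) ℝ)
    (x : EuclideanSpace ℝ (Fin d)) (u : EuclideanSpace ℝ (Fin q)) :
    EuclideanSpace ℝ (Fin d) :=
  x + Δ • b x + Real.sqrt Δ •
    (WithLp.equiv 2 (Fin d → ℝ)).symm ((σ x).mulVec (WithLp.equiv 2 (Fin q → ℝ) u))

/-!
Fix `x, x'` and let `f = g(ℰ(x,ε)) − g(ℰ(x',ε))`, so that `Qg(x) − Qg(x') = E[f ε]`. The coordinates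
of `ε` are orthonormal in `L²`, so Bessel's inequality gives `|E[f ε]| ≤ ‖f‖₂`, where Cauchy–Schwarz
would only give `√q ‖f‖₂`. Since `g` is `L`-Lipschitz, `‖f‖₂ ≤ L ‖ℰ(x,ε) − ℰ(x',ε)‖₂`, and as `ε` is
centred with identity covariance the last norm squared is exactly
`|x − x' + Δ(b(x) − b(x'))|² + Δ ‖σ(x) − σ(x')‖²`, at most
`((1 + Δ[b])² + Δ[σ]²) |x − x'|² = (1 + 2ΔC) |x − x'|² ≤ e^{2ΔC} |x − x'|²`.
-/

open scoped ENNReal NNReal RealInnerProductSpace Matrix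

theorem norm_le_sqrt_card_mul_norm {ι : Type*} [Fintype ι] (v : EuclideanSpace ℝ ι) :
    ‖v‖ ≤ √(Fintype.card ι) * ‖v‖ := by
  cases isEmpty_or_nonempty ι
  · simp [Subsingleton.elim v 0]
  · exact le_mul_of_one_le_left (norm_nonneg v)
      (Real.one_le_sqrt.2 (mod_cast Fintype.card_pos))

section SquareIntegrable

variable {Ω E F : Type*} {mΩ : MeasurableSpace Ω} {P : Measure Ω}
  [NormedAddCommGroup E] [NormedAddCommGroup F]

theorem integral_mul_le_sqrt_mul_sqrt {f g : Ω → ℝ} (hf : MemLp f 2 P) (hg : MemLp g 2 P) :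
    ∫ ω, f ω * g ω ∂P ≤ √(∫ ω, f ω ^ 2 ∂P) * √(∫ ω, g ω ^ 2 ∂P) := by
  have hholder : ∫ ω, |f ω| * |g ω| ∂P ≤ √(∫ ω, |f ω| ^ 2 ∂P) * √(∫ ω, |g ω| ^ 2 ∂P) := by
    simpa [Real.sqrt_eq_rpow] using
      integral_mul_le_Lp_mul_Lq_of_nonneg (μ := P) Real.HolderConjugate.two_two
        (.of_forall fun ω => abs_nonneg (f ω)) (.of_forall fun ω => abs_nonneg (g ω))
        (by simpa using hf.norm) (by simpa using hg.norm)
  calc ∫ ω, f ω * g ω ∂P ≤ ∫ ω, |f ω| * |g ω| ∂P :=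
        integral_mono (hf.integrable_mul hg) (hf.abs.integrable_mul hg.abs) fun ω =>
          (le_abs_self _).trans_eq (abs_mul _ _)
    _ ≤ √(∫ ω, f ω ^ 2 ∂P) * √(∫ ω, g ω ^ 2 ∂P) := by simpa only [sq_abs] using hholder

theorem memLp_comp_of_lipschitzWith [IsFiniteMeasure P] {p : ℝ≥0∞} {K : ℝ≥0} {g : E → F}
    (hg : LipschitzWith K g) {X : Ω → E} (hX : MemLp X p P) : MemLp (fun ω => g (X ω)) p P := by
  have hg_sub : LipschitzWith K fun x => g x - g 0 := fun x y => by
    simpa only [edist_sub_right] using hg x y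
  have hadd : MemLp (fun ω => (g (X ω) - g 0) + g 0) p P :=
    (hg_sub.comp_memLp (sub_self _) hX).add (memLp_const (g 0))
  simpa only [sub_add_cancel] using hadd

theorem sqrt_integral_norm_comp_sub_sq_le {K : ℝ≥0} {g : E → F} (hg : LipschitzWith K g)
    {X Y : Ω → E} (hXY : MemLp (X - Y) 2 P) :
    √(∫ ω, ‖g (X ω) - g (Y ω)‖ ^ 2 ∂P) ≤ K * √(∫ ω, ‖X ω - Y ω‖ ^ 2 ∂P) := by
  have hsq : ∫ ω, ‖g (X ω) - g (Y ω)‖ ^ 2 ∂P ≤ K ^ 2 * ∫ ω, ‖X ω - Y ω‖ ^ 2 ∂P := by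
    rw [← integral_const_mul]
    refine integral_mono_of_nonneg (.of_forall fun ω => sq_nonneg _)
      ((memLp_two_iff_integrable_sq_norm hXY.1).1 hXY |>.const_mul _) (.of_forall fun ω => ?_)
    simp only [← mul_pow]
    gcongr
    exact hg.norm_sub_le _ _
  calc √(∫ ω, ‖g (X ω) - g (Y ω)‖ ^ 2 ∂P)
      ≤ √(K ^ 2 * ∫ ω, ‖X ω - Y ω‖ ^ 2 ∂P) := Real.sqrt_le_sqrt hsq
    _ = K * √(∫ ω, ‖X ω - Y ω‖ ^ 2 ∂P) := by
        rw [Real.sqrt_mul (by positivity), Real.sqrt_sq K.coe_nonneg]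

end SquareIntegrable

section WhiteNoise

variable {Ω E ι κ : Type*} {mΩ : MeasurableSpace Ω} {P : Measure Ω}
  [NormedAddCommGroup E] [InnerProductSpace ℝ E] [Fintype ι] [Fintype κ]

/-- A standardized random vector: square integrable, centred, with identity covariance. The
covariance condition is stated without coordinates, through its quadratic form. -/
structure IsWhiteNoise (X : Ω → E) (P : Measure Ω) : Prop where
  memLp_two : MemLp X 2 P
  integral_eq_zero : ∫ ω, X ω ∂P = 0
  integral_inner_sq : ∀ u : E, ∫ ω, ⟪u, X ω⟫ ^ 2 ∂P = ‖u‖ ^ 2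

theorem IsWhiteNoise.integral_add_inner_sq [IsProbabilityMeasure P] [CompleteSpace E] {X : Ω → E}
    (hX : IsWhiteNoise X P) (a : ℝ) (u : E) :
    ∫ ω, (a + ⟪u, X ω⟫) ^ 2 ∂P = a ^ 2 + ‖u‖ ^ 2 := by
  have hlin : Integrable (fun ω => 2 * a * ⟪u, X ω⟫) P :=
    ((hX.memLp_two.integrable one_le_two).const_inner u).const_mul _
  have hmean : ∫ ω, ⟪u, X ω⟫ ∂P = 0 := by
    rw [integral_inner (hX.memLp_two.integrable one_le_two), hX.integral_eq_zero, inner_zero_right]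
  have haffine : Integrable (fun ω => a ^ 2 + 2 * a * ⟪u, X ω⟫) P := (integrable_const _).add hlin
  simp_rw [add_sq]
  rw [integral_add haffine (hX.memLp_two.const_inner u).integrable_sq,
    integral_add (integrable_const _) hlin, integral_const_mul, hmean, hX.integral_inner_sq]
  simp

theorem IsWhiteNoise.integral_norm_add_mulVec_sq [IsProbabilityMeasure P]
    {X : Ω → EuclideanSpace ℝ κ} (hX : IsWhiteNoise X P) (a : EuclideanSpace ℝ ι)
    (M : Matrix ι κ ℝ) :
    ∫ ω, ‖a + WithLp.toLp 2 (M *ᵥ X ω)‖ ^ 2 ∂P = ‖a‖ ^ 2 + ∑ i, ∑ j, M i j ^ 2 := by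
  have hrow (i : ι) (ω : Ω) :
      (a + WithLp.toLp 2 (M *ᵥ X ω)) i = a i + ⟪WithLp.toLp 2 (M i), X ω⟫ := by
    simp [Matrix.mulVec, dotProduct, PiLp.inner_apply, mul_comm]
  have hint (i : ι) : Integrable (fun ω => (a i + ⟪WithLp.toLp 2 (M i), X ω⟫) ^ 2) P :=
    ((memLp_const (a i)).add (hX.memLp_two.const_inner (WithLp.toLp 2 (M i)))).integrable_sq
  simp_rw [EuclideanSpace.real_norm_sq_eq, hrow]
  rw [integral_finsetSum _ fun i _ => hint i]
  simp_rw [hX.integral_add_inner_sq, EuclideanSpace.real_norm_sq_eq, Finset.sum_add_distrib]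

theorem IsWhiteNoise.norm_integral_smul_le [CompleteSpace E] {X : Ω → E} (hX : IsWhiteNoise X P)
    {f : Ω → ℝ} (hf : MemLp f 2 P) :
    ‖∫ ω, f ω • X ω ∂P‖ ≤ √(∫ ω, f ω ^ 2 ∂P) := by
  set v := ∫ ω, f ω • X ω ∂P with hv
  have hfX : Integrable (fun ω => f ω • X ω) P :=
    memLp_one_iff_integrable.1 (hX.memLp_two.smul hf)
  have hself : ‖v‖ * ‖v‖ ≤ √(∫ ω, f ω ^ 2 ∂P) * ‖v‖ := by
    calc ‖v‖ * ‖v‖ = ∫ ω, f ω * ⟪v, X ω⟫ ∂P := by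
          rw [← real_inner_self_eq_norm_mul_norm]
          nth_rw 2 [hv]
          simp_rw [← integral_inner hfX, real_inner_smul_right]
      _ ≤ √(∫ ω, f ω ^ 2 ∂P) * √(∫ ω, ⟪v, X ω⟫ ^ 2 ∂P) :=
          integral_mul_le_sqrt_mul_sqrt hf (hX.memLp_two.const_inner v)
      _ = √(∫ ω, f ω ^ 2 ∂P) * ‖v‖ := by
          rw [hX.integral_inner_sq, Real.sqrt_sq (norm_nonneg v)]
  obtain hv₀ | hv₀ := (norm_nonneg v).eq_or_lt
  · rw [← hv₀]
    positivity
  · exact le_of_mul_le_mul_right hself hv₀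

theorem isWhiteNoise_of_hasLaw_stdGaussian [FiniteDimensional ℝ E] [MeasurableSpace E]
    [BorelSpace E] {X : Ω → E} (hX : HasLaw X (stdGaussian E) P) : IsWhiteNoise X P where
  memLp_two := by
    have hid : MemLp id 2 (P.map X) := hX.map_eq ▸ IsGaussian.memLp_two_id
    exact hid.comp_of_map hX.aemeasurable
  integral_eq_zero := by rw [hX.integral_eq, integral_id_stdGaussian]
  integral_inner_sq u := by
    have hvar := variance_dual_stdGaussian (InnerProductSpace.toDual ℝ E u)
    rw [variance_of_integral_eq_zero (by fun_prop) (integral_strongDual_stdGaussian _),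
      LinearIsometryEquiv.norm_map] at hvar
    exact (hX.integral_comp (f := fun x => ⟪u, x⟫ ^ 2) (by fun_prop)).trans hvar

theorem hasLaw_stdGaussian_of_map_ofLp_eq_pi {X : Ω → EuclideanSpace ℝ ι} (hX : AEMeasurable X P)
    (hlaw : P.map (fun ω => WithLp.ofLp (X ω)) = Measure.pi fun _ => gaussianReal 0 1) :
    HasLaw X (stdGaussian (EuclideanSpace ℝ ι)) P where
  aemeasurable := hX
  map_eq := by
    rw [← map_pi_eq_stdGaussian, ← hlaw, AEMeasurable.map_map_of_aemeasurable (by fun_prop)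
      (by fun_prop)]
    rfl

end WhiteNoise

section EulerMap

variable {d q : ℕ} {Δ : ℝ} {b : EuclideanSpace ℝ (Fin d) → EuclideanSpace ℝ (Fin d)}
  {σ : EuclideanSpace ℝ (Fin d) → Matrix (Fin d) (Fin q) ℝ}
  {Ω : Type*} {mΩ : MeasurableSpace Ω} {P : Measure Ω} {ε : Ω → EuclideanSpace ℝ (Fin q)}

theorem eulerMap_sub_eulerMap (x x' : EuclideanSpace ℝ (Fin d)) (u : EuclideanSpace ℝ (Fin q)) :
    eulerMap Δ b σ x u - eulerMap Δ b σ x' u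
      = (x - x' + Δ • (b x - b x')) + WithLp.toLp 2 ((√Δ • (σ x - σ x')) *ᵥ u) := by
  simp only [eulerMap, WithLp.equiv_apply, WithLp.equiv_symm_apply, Matrix.smul_mulVec,
    Matrix.sub_mulVec, WithLp.toLp_smul, WithLp.toLp_sub]
  module

theorem memLp_eulerMap [IsFiniteMeasure P] {p : ℝ≥0∞} (hε : MemLp ε p P)
    (x : EuclideanSpace ℝ (Fin d)) : MemLp (fun ω => eulerMap Δ b σ x (ε ω)) p P :=
  (memLp_const (x + Δ • b x)).add
    ((hε.continuousLinearMap_comp (σ x).toEuclideanLin.toContinuousLinearMap).const_smul √Δ)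

theorem integral_norm_eulerMap_sub_sq [IsProbabilityMeasure P] (hΔ : 0 ≤ Δ)
    (hε : IsWhiteNoise ε P) (x x' : EuclideanSpace ℝ (Fin d)) :
    ∫ ω, ‖eulerMap Δ b σ x (ε ω) - eulerMap Δ b σ x' (ε ω)‖ ^ 2 ∂P
      = ‖x - x' + Δ • (b x - b x')‖ ^ 2 + Δ * ∑ i, ∑ j, (σ x i j - σ x' i j) ^ 2 := by
  simp_rw [eulerMap_sub_eulerMap, hε.integral_norm_add_mulVec_sq, Matrix.smul_apply,
    Matrix.sub_apply, smul_eq_mul, mul_pow, Real.sq_sqrt hΔ, Finset.mul_sum]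

theorem sq_one_add_mul_add_le_sq_exp (Δ β s : ℝ) :
    (1 + Δ * β) ^ 2 + Δ * s ^ 2 ≤ Real.exp (Δ * (β + (s ^ 2 + Δ * β ^ 2) / 2)) ^ 2 := by
  calc (1 + Δ * β) ^ 2 + Δ * s ^ 2 = 2 * (Δ * (β + (s ^ 2 + Δ * β ^ 2) / 2)) + 1 := by ring
    _ ≤ Real.exp (2 * (Δ * (β + (s ^ 2 + Δ * β ^ 2) / 2))) := Real.add_one_le_exp _
    _ = Real.exp (Δ * (β + (s ^ 2 + Δ * β ^ 2) / 2)) ^ 2 := by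
        rw [← Real.exp_nat_mul, Nat.cast_ofNat]

theorem sqrt_integral_norm_eulerMap_sub_sq_le [IsProbabilityMeasure P] (hΔ : 0 ≤ Δ) {Kb Kσ : ℝ}
    (hb : ∀ x x', ‖b x - b x'‖ ≤ Kb * ‖x - x'‖)
    (hσ : ∀ x x', √(∑ i, ∑ j, (σ x i j - σ x' i j) ^ 2) ≤ Kσ * ‖x - x'‖)
    (hε : IsWhiteNoise ε P) (x x' : EuclideanSpace ℝ (Fin d)) :
    √(∫ ω, ‖eulerMap Δ b σ x (ε ω) - eulerMap Δ b σ x' (ε ω)‖ ^ 2 ∂P)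
      ≤ Real.exp (Δ * (Kb + (Kσ ^ 2 + Δ * Kb ^ 2) / 2)) * ‖x - x'‖ := by
  have hdrift : ‖x - x' + Δ • (b x - b x')‖ ≤ (1 + Δ * Kb) * ‖x - x'‖ := by
    calc ‖x - x' + Δ • (b x - b x')‖ ≤ ‖x - x'‖ + ‖Δ • (b x - b x')‖ := norm_add_le _ _
      _ = ‖x - x'‖ + Δ * ‖b x - b x'‖ := by rw [norm_smul, Real.norm_of_nonneg hΔ]
      _ ≤ ‖x - x'‖ + Δ * (Kb * ‖x - x'‖) := by gcongr; exact hb x x'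
      _ = (1 + Δ * Kb) * ‖x - x'‖ := by ring
  have hdiffusion : ∑ i, ∑ j, (σ x i j - σ x' i j) ^ 2 ≤ (Kσ * ‖x - x'‖) ^ 2 :=
    (Real.sqrt_le_iff.1 (hσ x x')).2
  rw [integral_norm_eulerMap_sub_sq hΔ hε]
  refine Real.sqrt_le_iff.2 ⟨by positivity, ?_⟩
  calc ‖x - x' + Δ • (b x - b x')‖ ^ 2 + Δ * ∑ i, ∑ j, (σ x i j - σ x' i j) ^ 2
      ≤ ((1 + Δ * Kb) * ‖x - x'‖) ^ 2 + Δ * (Kσ * ‖x - x'‖) ^ 2 := by gcongr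
    _ = ((1 + Δ * Kb) ^ 2 + Δ * Kσ ^ 2) * ‖x - x'‖ ^ 2 := by ring
    _ ≤ Real.exp (Δ * (Kb + (Kσ ^ 2 + Δ * Kb ^ 2) / 2)) ^ 2 * ‖x - x'‖ ^ 2 := by
        gcongr
        exact sq_one_add_mul_add_le_sq_exp Δ Kb Kσ
    _ = (Real.exp (Δ * (Kb + (Kσ ^ 2 + Δ * Kb ^ 2) / 2)) * ‖x - x'‖) ^ 2 := by rw [mul_pow]

theorem stmt5_general [IsProbabilityMeasure P] (hΔ : 0 ≤ Δ) {Kb Kσ L : ℝ}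
    (hb : ∀ x x', ‖b x - b x'‖ ≤ Kb * ‖x - x'‖)
    (hσ : ∀ x x', √(∑ i, ∑ j, (σ x i j - σ x' i j) ^ 2) ≤ Kσ * ‖x - x'‖)
    (hε : IsWhiteNoise ε P) {g : EuclideanSpace ℝ (Fin d) → ℝ} (hL : 0 ≤ L)
    (hg : ∀ x x', |g x - g x'| ≤ L * ‖x - x'‖) (x x' : EuclideanSpace ℝ (Fin d)) :
    ‖(∫ ω, g (eulerMap Δ b σ x (ε ω)) • ε ω ∂P) - ∫ ω, g (eulerMap Δ b σ x' (ε ω)) • ε ω ∂P‖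
      ≤ Real.exp (Δ * (Kb + (Kσ ^ 2 + Δ * Kb ^ 2) / 2)) * L * ‖x - x'‖ := by
  lift L to ℝ≥0 using hL
  have hg_lip : LipschitzWith L g :=
    .of_dist_le_mul (by simpa only [dist_eq_norm, Real.norm_eq_abs] using hg)
  have hE (y) : MemLp (fun ω => eulerMap Δ b σ y (ε ω)) 2 P := memLp_eulerMap hε.memLp_two y
  have hgE (y) : MemLp (fun ω => g (eulerMap Δ b σ y (ε ω))) 2 P :=
    memLp_comp_of_lipschitzWith hg_lip (hE y)
  have hint (y) : Integrable (fun ω => g (eulerMap Δ b σ y (ε ω)) • ε ω) P :=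
    memLp_one_iff_integrable.1 (hε.memLp_two.smul (hgE y))
  rw [← integral_sub (hint x) (hint x')]
  simp_rw [← sub_smul]
  calc ‖∫ ω, (g (eulerMap Δ b σ x (ε ω)) - g (eulerMap Δ b σ x' (ε ω))) • ε ω ∂P‖
      ≤ √(∫ ω, (g (eulerMap Δ b σ x (ε ω)) - g (eulerMap Δ b σ x' (ε ω))) ^ 2 ∂P) :=
        hε.norm_integral_smul_le ((hgE x).sub (hgE x'))
    _ ≤ L * √(∫ ω, ‖eulerMap Δ b σ x (ε ω) - eulerMap Δ b σ x' (ε ω)‖ ^ 2 ∂P) := by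
        simpa only [Real.norm_eq_abs, sq_abs] using
          sqrt_integral_norm_comp_sub_sq_le hg_lip ((hE x).sub (hE x'))
    _ ≤ L * (Real.exp (Δ * (Kb + (Kσ ^ 2 + Δ * Kb ^ 2) / 2)) * ‖x - x'‖) := by
        gcongr
        exact sqrt_integral_norm_eulerMap_sub_sq_le hΔ hb hσ hε x x'
    _ = Real.exp (Δ * (Kb + (Kσ ^ 2 + Δ * Kb ^ 2) / 2)) * L * ‖x - x'‖ := by ring

end EulerMap

/-- The operator `Qg(x) = E[g(ℰ(x,ε)) ε] ∈ ℝ^q` is Lipschitz with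
`[Qg]_Lip ≤ √q e^{ΔC} L` when `g` is `L`-Lipschitz, where
`C = [b]_Lip + ([σ]²_Lip + Δ[b]²_Lip)/2`. -/
theorem stmt5 {Ω : Type*} {mΩ : MeasurableSpace Ω} (P : Measure Ω) [IsProbabilityMeasure P]
    {d q : ℕ} (Δ : ℝ) (hΔ : 0 < Δ)
    (b : EuclideanSpace ℝ (Fin d) → EuclideanSpace ℝ (Fin d))
    (σ : EuclideanSpace ℝ (Fin d) → Matrix (Fin d) (Fin q) ℝ)
    (Kb Kσ : ℝ) (hKb : 0 ≤ Kb) (hKσ : 0 ≤ Kσ)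
    (hb : ∀ x x', ‖b x - b x'‖ ≤ Kb * ‖x - x'‖)
    (hσ : ∀ x x', Real.sqrt (∑ i, ∑ j, (σ x i j - σ x' i j) ^ 2) ≤ Kσ * ‖x - x'‖)
    (ε : Ω → EuclideanSpace ℝ (Fin q)) (hεmeas : Measurable ε)
    (hεlaw : Measure.map (fun ω => WithLp.equiv 2 (Fin q → ℝ) (ε ω)) P
      = Measure.pi fun _ : Fin q => gaussianReal 0 1)
    (g : EuclideanSpace ℝ (Fin d) → ℝ) (L : ℝ) (hL : 0 ≤ L)
    (hg : ∀ x x', |g x - g x'| ≤ L * ‖x - x'‖) :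
    ∀ x x' : EuclideanSpace ℝ (Fin d),
      ‖(∫ ω, g (eulerMap Δ b σ x (ε ω)) • ε ω ∂P)
          - ∫ ω, g (eulerMap Δ b σ x' (ε ω)) • ε ω ∂P‖
        ≤ Real.sqrt q * Real.exp (Δ * (Kb + (Kσ ^ 2 + Δ * Kb ^ 2) / 2)) * L * ‖x - x'‖ := by
  have hε := isWhiteNoise_of_hasLaw_stdGaussian
    (hasLaw_stdGaussian_of_map_ofLp_eq_pi hεmeas.aemeasurable hεlaw)
  intro x x'
  simpa only [Fintype.card_fin, mul_assoc] using (norm_le_sqrt_card_mul_norm _).trans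
    (mul_le_mul_of_nonneg_left (stmt5_general hΔ.le hb hσ hε hL hg x x') (Real.sqrt_nonneg _))
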